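/- Let S¹ = N(σ¹_0,…,σ¹_{m₁}), S² = N(σ²_0,…,σ²_{m₂}) be Nikishin systems with σ¹_0 = σ²_0. Let I₁ ⊂ ℤ₊^{m₁+1}(•) and I₂ ⊂ ℤ₊^{m₂+1}(•) be complete ordered sequences of multi-indices. For each integer n ≥ 1, let A_n be the 'monic' mixed type multiple orthogonal polynomial system relative to (n₁(n); n₂(n−1)) and (S¹,S²), where n₁(n) ∈ I₁ has |n₁(n)| = n and n₂(n−1) ∈ I₂ has |n₂(n−1)| = n − 1, with associated form 𝔄_n(x) = Σ_{j=0}^{m₁} a_{n,j}(x) ŝ¹_{1,j}(x); and let B_n be the 'monic' mixed type system relative to (n₂(n); n₁(n−1)) and (S²,S¹) (roles of S¹ and S² interchanged), with associated form 𝔅_n(x) = Σ_{k=0}^{m₂} b_{n,k}(x) ŝ²_{1,k}(x). Then the sequences are bi-orthogonal: for all n, n′ ≥ 1, ∫ 𝔅_{n′}(x) 𝔄_n(x) dσ²_0(x) = 0 if n ≠ n′, and ∫ 𝔅_n(x) 𝔄_n(x) dσ²_0(x) ≠ 0. -/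

import Mathlib

open MeasureTheory Polynomial Set Filter

noncomputable section

/-- The support of a Borel measure on `ℝ`: points all of whose open neighborhoods
have positive measure. -/
def msupport (μ : Measure ℝ) : Set ℝ :=
  {x : ℝ | ∀ U : Set ℝ, IsOpen U → x ∈ U → μ U ≠ 0}

/-- The copy of a real set inside `ℂ`. -/
def cpx (s : Set ℝ) : Set ℂ := (fun x : ℝ => (x : ℂ)) '' s

/-- `nikhat μ e j g` is the Cauchy transform of the measure `⟨σ_j, …, σ_{j+g}⟩`,
where `σ_i = (e i) • (μ i)` is a measure of constant sign. -/
def nikhat (μ : ℕ → Measure ℝ) (e : ℕ → ℝ) : ℕ → ℕ → ℂ → ℂ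
  | j, 0, z => (e j : ℂ) * ∫ t, 1 / (z - (t : ℂ)) ∂(μ j)
  | j, g + 1, z => (e j : ℂ) * ∫ t, nikhat μ e (j + 1) g (t : ℂ) / (z - (t : ℂ)) ∂(μ j)

/-- The Cauchy transform `ŝ_{j+1,k}` of `s_{j+1,k} = ⟨σ_{j+1},…,σ_k⟩`, with the
convention that it is `≡ 1` when `k ≤ j`. -/
def wt (μ : ℕ → Measure ℝ) (e : ℕ → ℝ) (j k : ℕ) (z : ℂ) : ℂ :=
  if j < k then nikhat μ e (j + 1) (k - (j + 1)) z else 1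

/-- Integral of `f` against the measure `s_{j,k} = ⟨σ_j, …, σ_k⟩`
(whose density with respect to `σ_j` is `ŝ_{j+1,k}`). -/
def sInt (μ : ℕ → Measure ℝ) (e : ℕ → ℝ) (j k : ℕ) (f : ℝ → ℂ) : ℂ :=
  (e j : ℂ) * ∫ x, f x * wt μ e j k (x : ℂ) ∂(μ j)

/-- The linear form `𝒜_{n,j}(z) = ∑_{k=j}^{m₁} a_k(z) ŝ¹_{j+1,k}(z)`. -/
def linForm (μ : ℕ → Measure ℝ) (e : ℕ → ℝ) (m₁ j : ℕ) (A : ℕ → Polynomial ℝ)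
    (z : ℂ) : ℂ :=
  ∑ k ∈ Finset.Icc j m₁, Polynomial.aeval z (A k) * wt μ e j k z

/-- The linear forms with negative index:
`𝒜_{n,-j-1}(z) = ∫ 𝒜_{n,-j}(x) dσ²_j(x) / (z - x)`. -/
def linFormNeg (μ : ℕ → Measure ℝ) (e : ℕ → ℝ) (F : ℂ → ℂ) : ℕ → ℂ → ℂ
  | 0 => F
  | j + 1 => fun z => (e j : ℂ) * ∫ x, linFormNeg μ e F j (x : ℂ) / (z - (x : ℂ)) ∂(μ j)

/-- A Nikishin system `N(σ_0,…,σ_m)` of measures of constant sign `σ_j = (e j) • (μ j)`,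
with `Co(supp σ_j) = Δ_j = [a j, b j]` and `Δ_j ∩ Δ_{j+1} = ∅`. -/
structure NikSys (m : ℕ) where
  μ : ℕ → Measure ℝ
  e : ℕ → ℝ
  a : ℕ → ℝ
  b : ℕ → ℝ
  fin : ∀ j, IsFiniteMeasure (μ j)
  sgn : ∀ j, e j = 1 ∨ e j = -1
  hull : ∀ j ≤ m, convexHull ℝ (msupport (μ j)) = Set.Icc (a j) (b j)
  inf : ∀ j ≤ m, (msupport (μ j)).Infinite
  disj : ∀ j < m, Set.Icc (a j) (b j) ∩ Set.Icc (a (j + 1)) (b (j + 1)) = ∅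

/-- Decreasing multi-index (the class `ℤ₊^{m+1}(•)`). -/
def Decr (m : ℕ) (n : ℕ → ℕ) : Prop := ∀ j < m, n (j + 1) ≤ n j

/-- `|n| = n_0 + ⋯ + n_m`. -/
def msum (m : ℕ) (n : ℕ → ℕ) : ℕ := ∑ j ∈ Finset.range (m + 1), n j

/-- `N_{1,j} = n_j + ⋯ + n_m` (partial tail sums). -/
def tailSum (m : ℕ) (n : ℕ → ℕ) (j : ℕ) : ℕ := ∑ k ∈ Finset.Icc j m, n k

/-- Mixed type multiple orthogonal polynomials relative to `(n1;n2)` and `(S1,S2)`. -/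
def IsMOP (m₁ m₂ : ℕ) (S1 : NikSys m₁) (S2 : NikSys m₂)
    (n1 n2 : ℕ → ℕ) (A : ℕ → Polynomial ℝ) : Prop :=
  (∀ j ≤ m₁, (A j).degree < (n1 j : WithBot ℕ)) ∧
  (∃ j ≤ m₁, A j ≠ 0) ∧
  ∀ k ≤ m₂, ∀ ν < n2 k,
    sInt S2.μ S2.e 0 k (fun x => (x : ℂ) ^ ν * linForm S1.μ S1.e m₁ 0 A (x : ℂ)) = 0

/-- The "monic" normalization: the last entry different from zero has leading
coefficient `1`. -/
def MonicLast (m₁ : ℕ) (A : ℕ → Polynomial ℝ) : Prop :=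
  ∃ j ≤ m₁, (A j).Monic ∧ ∀ k, j < k → k ≤ m₁ → A k = 0

/-- `n^l`: increase the `l`-th component by one. -/
def bump (l : ℕ) (n : ℕ → ℕ) : ℕ → ℕ := fun j => if j = l then n j + 1 else n j


/-- `I` (given as a function `ℕ → (ℕ → ℕ)`) is a complete ordered sequence of
multi-indices in `ℤ₊^{m+1}(•)`: for each `n` the multi-index `I n` is decreasing,
supported on `{0,…,m}`, has total size `n`, and any two members are comparable
componentwise. -/
def CompleteOrdered (m : ℕ) (I : ℕ → (ℕ → ℕ)) : Prop :=
  (∀ n, Decr m (I n) ∧ (∀ j, m < j → I n j = 0) ∧ msum m (I n) = n) ∧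
  ∀ n n', n ≤ n' → ∀ j, I n j ≤ I n' j

/-
Each form `𝒜_j` is `p_j` plus Cauchy transforms of polynomial multiples of measures on `Δ_{j+1}`,
so dividing by the nodal polynomial of its zeros on `Δ_j` produces orthogonality relations for
`𝒜_{j+1}` on `Δ_{j+1}`, hence zeros of `𝒜_{j+1}`. Descending through the system, a nontrivial form
has fewer than `|n|` zeros on `Δ_0`. Conversely, a function orthogonal to all forms of a decreasing
multi-index `n` has at least `|n|` zeros on `Δ_0`: its Cauchy transform is orthogonal on the next
level, and the zeros found there raise the order of orthogonality on the present one. The two counts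
make the pairing of the two spaces of forms nondegenerate. Along complete ordered sequences `𝔄_n`
is orthogonal to every `𝔅_{n'}` of lower index, and symmetrically; if `∫ 𝔅_n 𝔄_n dσ²_0` vanished as
well, `𝔄_n` would be orthogonal to the whole space of dimension `n`.
-/

section SignChanges

lemma forall_pos_or_forall_neg_of_ne_zero {X : Type*} [TopologicalSpace X] {K : Set X}
    (hK : IsPreconnected K) {f : X → ℝ} (hf : ContinuousOn f K) (h0 : ∀ x ∈ K, f x ≠ 0) :
    (∀ x ∈ K, 0 < f x) ∨ ∀ x ∈ K, f x < 0 := by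
  by_contra! ⟨⟨x, hx, hfx⟩, y, hy, hfy⟩
  obtain ⟨z, hz, hfz⟩ := hK.intermediate_value hx hy hf ⟨hfx, hfy⟩
  exact h0 z hz hfz

lemma exists_nodal_mul_pos (Z : Finset ℝ) {K : Set ℝ} (hK : K.OrdConnected) {f : ℝ → ℝ}
    (hf : ContinuousOn f K) (h0 : ∀ x ∈ K, x ∉ Z → f x ≠ 0) :
    ∃ s : ℝ, s ≠ 0 ∧ ∃ Y ⊆ Z,
      ∀ x ∈ K, x ∉ Z → 0 < s * (Lagrange.nodal Y id).eval x * f x := by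
  induction Z using Finset.induction_on_max generalizing K with
  | empty =>
    rcases forall_pos_or_forall_neg_of_ne_zero hK.isPreconnected hf
      (fun x hx => h0 x hx (Finset.notMem_empty x)) with hpos | hneg
    · exact ⟨1, one_ne_zero, ∅, subset_rfl, fun x hx _ => by simpa using hpos x hx⟩
    · exact ⟨-1, by norm_num, ∅, subset_rfl, fun x hx _ => by simpa using hneg x hx⟩
  | insert z Z hz ih =>
    obtain ⟨s, hs, Y, hYZ, hleft⟩ := ih (K := K ∩ Iio z) (hK.inter ordConnected_Iio)
      (hf.mono inter_subset_left) fun x hx hxZ =>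
        h0 x hx.1 (Finset.mem_insert.not.2 (not_or.2 ⟨(mem_Iio.1 hx.2).ne, hxZ⟩))
    have hnodal_pos : ∀ x > z, 0 < (Lagrange.nodal Y id).eval x := fun x hx => by
      rw [Lagrange.eval_nodal]
      exact Finset.prod_pos fun y hy => sub_pos.2 ((hz y (hYZ hy)).trans hx)
    have hright : (∀ x ∈ K ∩ Ioi z, 0 < s * f x) ∨ ∀ x ∈ K ∩ Ioi z, s * f x < 0 := by
      refine forall_pos_or_forall_neg_of_ne_zero (hK.inter ordConnected_Ioi).isPreconnected
        (continuousOn_const.mul (hf.mono inter_subset_left)) fun x hx =>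
          mul_ne_zero hs (h0 x hx.1 fun hxZ => ?_)
      rcases Finset.mem_insert.1 hxZ with rfl | hxZ
      exacts [(mem_Ioi.1 hx.2).false, lt_asymm hx.2 (hz x hxZ)]
    rcases hright with hpos | hneg
    · refine ⟨s, hs, Y, hYZ.trans (Finset.subset_insert z Z), fun x hx hxZ => ?_⟩
      rw [Finset.mem_insert, not_or] at hxZ
      rcases lt_or_gt_of_ne hxZ.1 with hlt | hgt
      · exact hleft x ⟨hx, hlt⟩ hxZ.2
      · rw [mul_right_comm]
        exact mul_pos (hpos x ⟨hx, hgt⟩) (hnodal_pos x hgt)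
    · refine ⟨-s, neg_ne_zero.2 hs, insert z Y, Finset.insert_subset_insert z hYZ,
        fun x hx hxZ => ?_⟩
      rw [Finset.mem_insert, not_or] at hxZ
      have hfactor : -s * (Lagrange.nodal (insert z Y) id).eval x * f x =
          (z - x) * (s * (Lagrange.nodal Y id).eval x * f x) := by
        rw [Lagrange.nodal_insert_eq_nodal fun hzY => (hz z (hYZ hzY)).false]
        simp only [eval_mul, eval_sub, eval_X, eval_C, id]
        ring
      rw [hfactor]
      rcases lt_or_gt_of_ne hxZ.1 with hlt | hgt
      · exact mul_pos (sub_pos.2 hlt) (hleft x ⟨hx, hlt⟩ hxZ.2)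
      · rw [mul_right_comm s]
        exact mul_pos_of_neg_of_neg (sub_neg.2 hgt)
          (mul_neg_of_neg_of_pos (hneg x ⟨hx, hgt⟩) (hnodal_pos x hgt))

end SignChanges

section Orthogonality

lemma integrable_of_continuousOn_of_ae_mem {X E : Type*} [TopologicalSpace X] [T2Space X]
    [MeasurableSpace X] [OpensMeasurableSpace X] [TopologicalSpace.PseudoMetrizableSpace X]
    [NormedAddCommGroup E] {μ : Measure X} [IsFiniteMeasureOnCompacts μ] {K : Set X}
    (hK : IsCompact K) (hμ : ∀ᵐ x ∂μ, x ∈ K) {f : X → E} (hf : ContinuousOn f K) :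
    Integrable f μ := by
  have hint : IntegrableOn f K μ := hf.integrableOn_compact hK
  rwa [IntegrableOn, Measure.restrict_eq_self_of_ae_mem hμ] at hint

variable {μ : Measure ℝ} [IsFiniteMeasureOnCompacts μ] {K : Set ℝ}

lemma integrable_eval_mul (hK : IsCompact K) (hμ : ∀ᵐ x ∂μ, x ∈ K) {f : ℝ → ℝ}
    (hf : ContinuousOn f K) (p : ℝ[X]) : Integrable (fun x => p.eval x * f x) μ :=
  integrable_of_continuousOn_of_ae_mem hK hμ (p.continuous.continuousOn.mul hf)

lemma exists_integral_nodal_mul_ne_zero (hK : IsCompact K) (hKo : K.OrdConnected)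
    (hμ : ∀ᵐ x ∂μ, x ∈ K) (hsupp : μ.support.Infinite) {f : ℝ → ℝ} (hf : ContinuousOn f K)
    (Z : Finset ℝ) (hZ : ∀ x ∈ K, x ∉ Z → f x ≠ 0) (hfZ : ∀ z ∈ Z, f z = 0) :
    ∃ Y ⊆ Z, ∫ x, (Lagrange.nodal Y id).eval x * f x ∂μ ≠ 0 := by
  obtain ⟨s, -, Y, hYZ, hpos⟩ := exists_nodal_mul_pos Z hKo hf hZ
  refine ⟨Y, hYZ, fun hint => hsupp (Z.finite_toSet.subset ?_)⟩
  have hg_nonneg : 0 ≤ᵐ[μ] fun x => s * (Lagrange.nodal Y id).eval x * f x := by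
    filter_upwards [hμ] with x hx
    by_cases hxZ : x ∈ Z
    · simp [hfZ x hxZ]
    · exact (hpos x hx hxZ).le
  have hg_int : Integrable (fun x => s * (Lagrange.nodal Y id).eval x * f x) μ :=
    integrable_of_continuousOn_of_ae_mem hK hμ
      ((continuous_const.mul (Lagrange.nodal Y id).continuous).continuousOn.mul hf)
  have hg_zero : ∀ᵐ x ∂μ, s * (Lagrange.nodal Y id).eval x * f x = 0 := by
    refine (integral_eq_zero_iff_of_nonneg_ae hg_nonneg hg_int).1 ?_
    simp only [mul_assoc, integral_const_mul, hint, mul_zero]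
  refine Measure.support_subset_of_isClosed Z.finite_toSet.isClosed ?_
  filter_upwards [hμ, hg_zero] with x hx hx0
  by_contra hxZ
  exact (hpos x hx hxZ).ne' hx0

theorem exists_zeros_of_forall_integral_eq_zero (hK : IsCompact K) (hKo : K.OrdConnected)
    (hμ : ∀ᵐ x ∂μ, x ∈ K) (hsupp : μ.support.Infinite) {f : ℝ → ℝ} (hf : ContinuousOn f K)
    {N : ℕ} (horth : ∀ q : ℝ[X], q.degree < N → ∫ x, q.eval x * f x ∂μ = 0) :
    ∃ Z : Finset ℝ, Z.card = N ∧ ∀ z ∈ Z, z ∈ K ∧ f z = 0 := by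
  by_contra hcon
  have hzeros : ∀ Z : Finset ℝ, (∀ z ∈ Z, z ∈ K ∧ f z = 0) → Z.card < N := fun Z hZ => by
    by_contra! hcard
    obtain ⟨Y, hYZ, hY⟩ := Finset.exists_subset_card_eq hcard
    exact hcon ⟨Y, hY, fun z hz => hZ z (hYZ hz)⟩
  have hfin : {x | x ∈ K ∧ f x = 0}.Finite := by
    by_contra hinf
    obtain ⟨Z, hZ, hcard⟩ := Set.Infinite.exists_subset_card_eq hinf N
    exact hcon ⟨Z, hcard, fun z hz => hZ hz⟩
  have hmem : ∀ x, x ∈ hfin.toFinset ↔ x ∈ K ∧ f x = 0 := fun x => hfin.mem_toFinset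
  obtain ⟨Y, hY, hne⟩ := exists_integral_nodal_mul_ne_zero hK hKo hμ hsupp hf hfin.toFinset
    (fun x hx hxZ h0 => hxZ ((hmem x).2 ⟨hx, h0⟩)) fun z hz => ((hmem z).1 hz).2
  refine hne (horth _ ?_)
  rw [Lagrange.degree_nodal]
  exact_mod_cast hzeros Y fun z hz => (hmem z).1 (hY hz)

theorem exists_zeros_of_forall_integral_div_eq_zero (hK : IsCompact K) (hKo : K.OrdConnected)
    (hμ : ∀ᵐ x ∂μ, x ∈ K) (hsupp : μ.support.Infinite) {f g : ℝ → ℝ} (hf : ContinuousOn f K)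
    (hg : ContinuousOn g K) (hg0 : ∀ x ∈ K, g x ≠ 0) {N : ℕ}
    (horth : ∀ q : ℝ[X], q.degree < N → ∫ x, q.eval x * (f x / g x) ∂μ = 0) :
    ∃ Z : Finset ℝ, Z.card = N ∧ ∀ z ∈ Z, z ∈ K ∧ f z = 0 := by
  obtain ⟨Z, hcard, hZ⟩ := exists_zeros_of_forall_integral_eq_zero hK hKo hμ hsupp
    (hf.div hg hg0) horth
  exact ⟨Z, hcard, fun z hz => ⟨(hZ z hz).1,
    (div_eq_zero_iff.1 (hZ z hz).2).resolve_right (hg0 z (hZ z hz).1)⟩⟩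

lemma integral_eval_mul_eq_zero_of_moments {μ : Measure ℝ} {f : ℝ → ℝ} {n : ℕ}
    (hint : ∀ i < n, Integrable (fun x => x ^ i * f x) μ)
    (hmom : ∀ i < n, ∫ x, x ^ i * f x ∂μ = 0) {q : ℝ[X]} (hq : q.degree < n) :
    ∫ x, q.eval x * f x ∂μ = 0 := by
  rcases eq_or_ne q 0 with rfl | hq0
  · simp
  have hexpand : ∀ x, q.eval x * f x = ∑ i ∈ Finset.range n, q.coeff i * (x ^ i * f x) :=
    fun x => by
      rw [eval_eq_sum_range' ((natDegree_lt_iff_degree_lt hq0).2 hq), Finset.sum_mul]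
      exact Finset.sum_congr rfl fun i _ => mul_assoc _ _ _
  simp_rw [hexpand]
  rw [integral_finsetSum _ fun i hi => (hint i (Finset.mem_range.1 hi)).const_mul _]
  refine Finset.sum_eq_zero fun i hi => ?_
  rw [integral_const_mul, hmom i (Finset.mem_range.1 hi), mul_zero]

end Orthogonality

section DividedDifferences

lemma eval_nodal_id_ne_zero {F : Type*} [Field F] {Z : Finset F} {t : F} (ht : t ∉ Z) :
    (Lagrange.nodal Z id).eval t ≠ 0 :=
  Lagrange.eval_nodal_not_at_node fun _ hz => (ne_of_mem_of_not_mem hz ht).symm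

lemma sum_nodalWeight_mul_eval_div_sub {F : Type*} [Field F] [DecidableEq F] {Z : Finset F}
    {p : F[X]} (hp : p.degree < Z.card) {t : F} (ht : t ∉ Z) :
    ∑ z ∈ Z, Lagrange.nodalWeight Z id z * (p.eval z / (t - z)) =
      p.eval t / (Lagrange.nodal Z id).eval t := by
  rw [eq_div_iff (eval_nodal_id_ne_zero ht)]
  conv_rhs => rw [Lagrange.eq_interpolate (injOn_id _) hp,
    Lagrange.eval_interpolate_not_at_node (v := id) _ fun _ hz =>
      (ne_of_mem_of_not_mem hz ht).symm]
  rw [mul_comm]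
  simp only [id, div_eq_mul_inv, mul_assoc, mul_comm (t - _)⁻¹]

lemma sum_nodalWeight_mul_eval_eq_zero {F : Type*} [Field F] [DecidableEq F] {Z : Finset F}
    {p : F[X]} (hp : p.degree + 1 < Z.card) :
    ∑ z ∈ Z, Lagrange.nodalWeight Z id z * p.eval z = 0 := by
  have hp' : p.degree < (Z.card - 1 : ℕ) := by
    rcases eq_or_ne p 0 with rfl | hp0
    · exact WithBot.bot_lt_coe _
    · rw [degree_eq_natDegree hp0] at hp ⊢
      norm_cast at hp ⊢
      omega
  rw [← coeff_eq_zero_of_degree_lt hp', Lagrange.coeff_eq_sum (injOn_id _)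
    (hp'.trans_le (by exact_mod_cast Nat.sub_le _ _))]
  exact Finset.sum_congr rfl fun z _ => by
    rw [Lagrange.nodalWeight, Finset.prod_inv_distrib, div_eq_inv_mul, id]

lemma degree_mul_add_one_lt {R : Type*} [Semiring R] {p q : R[X]} {a b : ℕ}
    (hp : p.degree < a) (hq : q.degree < b) : (p * q).degree + 1 < (a + b : ℕ) := by
  refine (add_le_add_left (degree_mul_le p q) 1).trans_lt ?_
  rcases eq_or_ne p 0 with rfl | hp0
  · simp
  rcases eq_or_ne q 0 with rfl | hq0
  · simp
  rw [degree_eq_natDegree hp0] at hp ⊢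
  rw [degree_eq_natDegree hq0] at hq ⊢
  norm_cast at *
  omega

lemma degree_divByMonic_lt_of_degree_lt_add {R : Type*} [CommRing R] {p W : R[X]}
    (hW : W.Monic) {n : ℕ} (hp : p.degree < (n + W.natDegree : ℕ)) : (p /ₘ W).degree < n := by
  rcases eq_or_ne (p /ₘ W) 0 with h0 | h0
  · rw [h0, degree_zero]
    exact WithBot.bot_lt_coe n
  nontriviality R
  have hle : W.degree ≤ p.degree := not_lt.1 (mt (divByMonic_eq_zero_iff hW).2 h0)
  rw [← degree_add_divByMonic hW hle, degree_eq_natDegree hW.ne_zero,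
    degree_eq_natDegree h0] at hp
  rw [degree_eq_natDegree h0]
  norm_cast at *
  omega

end DividedDifferences

/-- The Cauchy transform `x ↦ ∫ f(t) dμ(t) / (x - t)` of the measure with density `f` with
respect to `μ`. It is meant to be evaluated off the support of `μ`. -/
def cauchyTransform (μ : Measure ℝ) (f : ℝ → ℝ) (x : ℝ) : ℝ := ∫ t, f t / (x - t) ∂μ

namespace cauchyTransform

variable {μ ν : Measure ℝ} {K L : Set ℝ} {f g : ℝ → ℝ}

lemma continuousOn_div_sub (hf : ContinuousOn f K) {x : ℝ} (hx : x ∉ K) :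
    ContinuousOn (fun t => f t / (x - t)) K :=
  hf.div (continuousOn_const.sub continuousOn_id) fun _ ht =>
    sub_ne_zero.2 fun hxt => hx (hxt ▸ ht)

lemma continuousOn_mul_div_sub (hKL : Disjoint K L) (hf : ContinuousOn f K)
    (hg : ContinuousOn g L) :
    ContinuousOn (fun p : ℝ × ℝ => g p.1 * (f p.2 / (p.1 - p.2))) (L ×ˢ K) :=
  (hg.comp continuousOn_fst fun _ hp => hp.1).mul <|
    (hf.comp continuousOn_snd fun _ hp => hp.2).div
      (continuousOn_fst.sub continuousOn_snd) fun _ hp =>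
        sub_ne_zero.2 fun h => hKL.ne_of_mem hp.2 hp.1 h.symm

section Concentrated

variable [IsFiniteMeasure μ] (hK : IsCompact K) (hμ : ∀ᵐ t ∂μ, t ∈ K) (hf : ContinuousOn f K)
include hK hμ hf

lemma integrable_div_sub {x : ℝ} (hx : x ∉ K) : Integrable (fun t => f t / (x - t)) μ :=
  integrable_of_continuousOn_of_ae_mem hK hμ (continuousOn_div_sub hf hx)

theorem continuousOn (hL : IsCompact L) (hKL : Disjoint K L) :
    ContinuousOn (cauchyTransform μ f) L := by
  obtain ⟨C, hC⟩ := (hL.prod hK).exists_bound_of_continuousOn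
    (continuousOn_mul_div_sub hKL hf (continuousOn_const (c := (1 : ℝ))))
  refine continuousOn_of_dominated (bound := fun _ => C)
    (fun x hx => (integrable_div_sub hK hμ hf (hKL.notMem_of_mem_right hx)).aestronglyMeasurable)
    (fun x hx => ?_) (integrable_const C) ?_
  · filter_upwards [hμ] with t ht
    simpa only [one_mul] using hC (x, t) ⟨hx, ht⟩
  · filter_upwards [hμ] with t ht
    exact continuousOn_const.div (continuousOn_id.sub continuousOn_const) fun x hx =>
      sub_ne_zero.2 (hKL.ne_of_mem ht hx).symm

theorem integral_mul_eq_neg [IsFiniteMeasure ν] (hL : IsCompact L) (hν : ∀ᵐ x ∂ν, x ∈ L)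
    (hKL : Disjoint K L) (hg : ContinuousOn g L) :
    ∫ x, g x * cauchyTransform μ f x ∂ν = -∫ t, f t * cauchyTransform ν g t ∂μ := by
  have hkernel : Integrable (fun p : ℝ × ℝ => g p.1 * (f p.2 / (p.1 - p.2))) (ν.prod μ) := by
    refine integrable_of_continuousOn_of_ae_mem (hL.prod hK) ?_
      (continuousOn_mul_div_sub hKL hf hg)
    rw [Measure.ae_prod_mem_iff_ae_ae_mem (hL.prod hK).measurableSet]
    filter_upwards [hν] with x hx
    filter_upwards [hμ] with t ht using ⟨hx, ht⟩
  calc ∫ x, g x * cauchyTransform μ f x ∂ν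
      = ∫ x, ∫ t, g x * (f t / (x - t)) ∂μ ∂ν := by
        simp only [cauchyTransform, integral_const_mul]
    _ = ∫ t, ∫ x, g x * (f t / (x - t)) ∂ν ∂μ := integral_integral_swap hkernel
    _ = -∫ t, f t * cauchyTransform ν g t ∂μ := by
        simp only [cauchyTransform, ← integral_const_mul, ← integral_neg]
        refine integral_congr_ae (.of_forall fun t => integral_congr_ae (.of_forall fun x => ?_))
        simp only [← neg_sub x t, div_neg]
        ring

lemma sum_nodalWeight_mul {Z : Finset ℝ} (hZ : ∀ z ∈ Z, z ∉ K) {r : ℝ[X]}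
    (hr : r.degree < Z.card) :
    ∑ z ∈ Z, Lagrange.nodalWeight Z id z * (r.eval z * cauchyTransform μ f z) =
      -∫ t, r.eval t * (f t / (Lagrange.nodal Z id).eval t) ∂μ := by
  have hterm : ∀ z ∈ Z, Integrable
      (fun t => Lagrange.nodalWeight Z id z * (r.eval z * (f t / (z - t)))) μ := fun z hz =>
    ((integrable_div_sub hK hμ hf (hZ z hz)).const_mul _).const_mul _
  simp only [cauchyTransform, ← integral_const_mul]
  rw [← integral_finsetSum _ hterm, ← integral_neg]
  refine integral_congr_ae ?_
  filter_upwards [hμ] with t ht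
  calc ∑ z ∈ Z, Lagrange.nodalWeight Z id z * (r.eval z * (f t / (z - t)))
      = -(f t * ∑ z ∈ Z, Lagrange.nodalWeight Z id z * (r.eval z / (t - z))) := by
        rw [Finset.mul_sum, ← Finset.sum_neg_distrib]
        refine Finset.sum_congr rfl fun z _ => ?_
        rw [← neg_sub t z, div_neg]
        ring
    _ = -(r.eval t * (f t / (Lagrange.nodal Z id).eval t)) := by
        rw [sum_nodalWeight_mul_eval_div_sub hr fun htZ => hZ t htZ ht]
        ring

variable {n : ℕ} (horth : ∀ q : ℝ[X], q.degree < n → ∫ t, q.eval t * f t ∂μ = 0)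
include horth

lemma eval_mul_of_orthogonal {p : ℝ[X]} (hp : p.degree < (n + 1 : ℕ)) {z : ℝ} (hz : z ∉ K) :
    p.eval z * cauchyTransform μ f z = cauchyTransform μ (fun t => p.eval t * f t) z := by
  set d := p /ₘ (X - C z)
  have hd : ∀ t, p.eval t = p.eval z + (t - z) * d.eval t := fun t => by
    rw [← sub_eq_iff_eq_add']
    simpa [modByMonic_X_sub_C_eq_C_eval] using
      (congr_arg (eval t) (X_sub_C_mul_divByMonic_eq_sub_modByMonic p z)).symm
  have hd_orth : ∫ t, d.eval t * f t ∂μ = 0 :=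
    horth d (degree_divByMonic_lt_of_degree_lt_add (monic_X_sub_C z) (by rwa [natDegree_X_sub_C]))
  have hpf : ContinuousOn (fun t => p.eval t * f t) K := p.continuous.continuousOn.mul hf
  calc p.eval z * cauchyTransform μ f z
      = ∫ t, (p.eval t * f t / (z - t) + d.eval t * f t) ∂μ := by
        rw [cauchyTransform, ← integral_const_mul]
        refine integral_congr_ae ?_
        filter_upwards [hμ] with t ht
        have hzt : z - t ≠ 0 := sub_ne_zero.2 (ne_of_mem_of_not_mem ht hz).symm
        rw [hd t]
        field_simp
        ring
    _ = cauchyTransform μ (fun t => p.eval t * f t) z := by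
        rw [integral_add (integrable_div_sub hK hμ hpf hz) (integrable_eval_mul hK hμ hf d),
          hd_orth, add_zero, cauchyTransform]

theorem integral_div_nodal_eq_zero {Z : Finset ℝ} (hZ : ∀ z ∈ Z, z ∉ K)
    (hfZ : ∀ z ∈ Z, cauchyTransform μ f z = 0) {q : ℝ[X]} (hq : q.degree < (n + Z.card : ℕ)) :
    ∫ t, q.eval t * (f t / (Lagrange.nodal Z id).eval t) ∂μ = 0 := by
  set W := Lagrange.nodal Z id
  have hW : W.Monic := Lagrange.nodal_monic
  have hW0 : ∀ t ∈ K, W.eval t ≠ 0 := fun t ht =>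
    eval_nodal_id_ne_zero fun htZ => hZ t htZ ht
  have hquot : ∫ t, (q /ₘ W).eval t * f t ∂μ = 0 := by
    refine horth _ (degree_divByMonic_lt_of_degree_lt_add hW ?_)
    rwa [Lagrange.natDegree_nodal]
  have hrem : ∫ t, (q %ₘ W).eval t * (f t / W.eval t) ∂μ = 0 := by
    have hdeg : (q %ₘ W).degree < Z.card := by
      simpa only [W, Lagrange.degree_nodal] using degree_modByMonic_lt q hW
    rw [← neg_eq_zero, ← sum_nodalWeight_mul hK hμ hf hZ hdeg]
    exact Finset.sum_eq_zero fun z hz => by rw [hfZ z hz, mul_zero, mul_zero]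
  calc ∫ t, q.eval t * (f t / W.eval t) ∂μ
      = ∫ t, ((q /ₘ W).eval t * f t + (q %ₘ W).eval t * (f t / W.eval t)) ∂μ := by
        refine integral_congr_ae ?_
        filter_upwards [hμ] with t ht
        have hWt := hW0 t ht
        nth_rewrite 1 [← modByMonic_add_div q W]
        rw [eval_add, eval_mul]
        field_simp
        ring
    _ = 0 := by
        rw [integral_add (integrable_eval_mul hK hμ hf _) (integrable_eval_mul hK hμ
          (f := fun t => f t / W.eval t) (hf.div W.continuous.continuousOn hW0) _),
          hquot, hrem, add_zero]

end Concentrated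

end cauchyTransform

lemma msupport_eq_support (μ : Measure ℝ) : msupport μ = μ.support := by
  ext x
  simp only [msupport, Measure.support_eq_forall_isOpen, mem_ofPred_eq, pos_iff_ne_zero]
  exact forall_congr' fun U => forall_comm

lemma Decr.le {m : ℕ} {n : ℕ → ℕ} (hn : Decr m n) {j k : ℕ} (hjk : j ≤ k) (hkm : k ≤ m) :
    n k ≤ n j := by
  induction k, hjk using Nat.le_induction with
  | base => exact le_rfl
  | succ k _ ih => exact (hn k hkm).trans (ih (by lia))

lemma sum_Icc_eq_add {M : Type*} [AddCommMonoid M] (f : ℕ → M) {j m : ℕ} (hjm : j ≤ m) :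
    ∑ k ∈ Finset.Icc j m, f k = f j + ∑ k ∈ Finset.Icc (j + 1) m, f k := by
  rw [← Finset.insert_Icc_add_one_left_eq_Icc hjm, Finset.sum_insert (by simp)]

lemma tailSum_eq_add (n : ℕ → ℕ) {j m : ℕ} (hjm : j ≤ m) :
    tailSum m n j = n j + tailSum m n (j + 1) :=
  sum_Icc_eq_add n hjm

lemma tailSum_zero (m : ℕ) (n : ℕ → ℕ) : tailSum m n 0 = msum m n := by
  rw [tailSum, msum, Nat.range_succ_eq_Icc_zero]

section Weights

variable (μ : ℕ → Measure ℝ) (e : ℕ → ℝ)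

lemma wt_self (j : ℕ) (z : ℂ) : wt μ e j j z = 1 := if_neg (lt_irrefl j)

lemma wt_of_lt {j k : ℕ} (hjk : j < k) (z : ℂ) :
    wt μ e j k z = e (j + 1) * ∫ t, wt μ e (j + 1) k (t : ℂ) / (z - t) ∂(μ (j + 1)) := by
  obtain ⟨g, rfl⟩ := Nat.exists_eq_add_of_lt hjk
  cases g with
  | zero => simp [wt, nikhat]
  | succ g => simp [wt, nikhat, show j + (g + 1) - (j + 1) = g by lia]

end Weights

namespace NikSys

variable {m : ℕ} (S : NikSys m)

instance isFiniteMeasure_μ (j : ℕ) : IsFiniteMeasure (S.μ j) := S.fin j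

lemma e_ne_zero (j : ℕ) : S.e j ≠ 0 := by
  rcases S.sgn j with h | h <;> simp [h]

/-- The interval `Δ_j = [a_j, b_j]`, the convex hull of the support of `σ_j` for `j ≤ m`. -/
def interval (j : ℕ) : Set ℝ := Icc (S.a j) (S.b j)

lemma isCompact_interval (j : ℕ) : IsCompact (S.interval j) := isCompact_Icc

lemma ordConnected_interval (j : ℕ) : (S.interval j).OrdConnected := ordConnected_Icc

lemma disjoint_interval {j : ℕ} (hj : j < m) : Disjoint (S.interval j) (S.interval (j + 1)) :=
  disjoint_iff_inter_eq_empty.2 (S.disj j hj)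

lemma convexHull_support {j : ℕ} (hj : j ≤ m) :
    convexHull ℝ (S.μ j).support = S.interval j := by
  rw [← msupport_eq_support, S.hull j hj, interval]

lemma ae_mem_interval {j : ℕ} (hj : j ≤ m) : ∀ᵐ x ∂(S.μ j), x ∈ S.interval j := by
  filter_upwards [(S.μ j).support_mem_ae] with x hx
  exact S.convexHull_support hj ▸ subset_convexHull ℝ _ hx

lemma infinite_support {j : ℕ} (hj : j ≤ m) : (S.μ j).support.Infinite :=
  msupport_eq_support (S.μ j) ▸ S.inf j hj

/-- The Cauchy transform `ŝ_{j+1,k}` as a real function on `ℝ`, with value `1` when `k ≤ j`;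
`ofReal_weight` identifies it with `wt`. -/
def weight (j k : ℕ) (x : ℝ) : ℝ := (wt S.μ S.e j k x).re

lemma weight_self (j : ℕ) (x : ℝ) : S.weight j j x = 1 := by
  rw [weight, wt_self, Complex.one_re]

lemma ofReal_weight {j k : ℕ} (hjk : j ≤ k) (x : ℝ) : (S.weight j k x : ℂ) = wt S.μ S.e j k x := by
  induction hjk using Nat.decreasingInduction generalizing x with
  | self => rw [weight_self, wt_self, Complex.ofReal_one]
  | of_succ j hjk ih =>
    have hreal : wt S.μ S.e j k x =
        (S.e (j + 1) * ∫ t, S.weight (j + 1) k t / (x - t) ∂(S.μ (j + 1)) : ℝ) := by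
      rw [wt_of_lt _ _ hjk, Complex.ofReal_mul, ← integral_complex_ofReal]
      simp only [← ih, Complex.ofReal_div, Complex.ofReal_sub]
    rw [weight, hreal, Complex.ofReal_re]

lemma weight_of_lt {j k : ℕ} (hjk : j < k) (x : ℝ) :
    S.weight j k x =
      S.e (j + 1) * cauchyTransform (S.μ (j + 1)) (S.weight (j + 1) k) x := by
  have h := S.ofReal_weight hjk.le x
  rw [wt_of_lt _ _ hjk] at h
  apply Complex.ofReal_injective
  rw [h, cauchyTransform, Complex.ofReal_mul, ← integral_complex_ofReal]
  simp only [← S.ofReal_weight hjk, Complex.ofReal_div, Complex.ofReal_sub]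

lemma continuousOn_weight {j k : ℕ} (hjk : j ≤ k) (hkm : k ≤ m) :
    ContinuousOn (S.weight j k) (S.interval j) := by
  induction hjk using Nat.decreasingInduction with
  | self => exact continuousOn_const.congr fun x _ => S.weight_self k x
  | of_succ j hjk ih =>
    exact (continuousOn_const.mul (cauchyTransform.continuousOn (S.isCompact_interval _)
      (S.ae_mem_interval (by lia)) ih (S.isCompact_interval j)
      (S.disjoint_interval (by lia)).symm)).congr fun x _ => S.weight_of_lt hjk x

/-- The linear form `𝒜_j = ∑_{k ≥ j} p_k ŝ_{j+1,k}` as a real function on `ℝ`; `ofReal_form`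
identifies it with `linForm`. -/
def form (j : ℕ) (p : ℕ → ℝ[X]) (x : ℝ) : ℝ :=
  ∑ k ∈ Finset.Icc j m, (p k).eval x * S.weight j k x

lemma ofReal_form (j : ℕ) (p : ℕ → ℝ[X]) (x : ℝ) :
    (S.form j p x : ℂ) = linForm S.μ S.e m j p x := by
  rw [form, linForm, Complex.ofReal_sum]
  refine Finset.sum_congr rfl fun k hk => ?_
  rw [Complex.ofReal_mul, S.ofReal_weight (Finset.mem_Icc.1 hk).1]
  congr 1
  exact (aeval_algebraMap_apply_eq_algebraMap_eval x (p k)).symm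

lemma continuousOn_form (j : ℕ) (p : ℕ → ℝ[X]) :
    ContinuousOn (S.form j p) (S.interval j) :=
  continuousOn_finsetSum _ fun k hk => (p k).continuous.continuousOn.mul
    (S.continuousOn_weight (Finset.mem_Icc.1 hk).1 (Finset.mem_Icc.1 hk).2)

end NikSys

namespace NikSys

variable {m : ℕ} (S : NikSys m)

section Zeros

variable {j : ℕ} {n : ℕ → ℕ}

lemma form_eq_add_cauchyTransform (hj : j < m) (p : ℕ → ℝ[X]) (x : ℝ) :
    S.form j p x = (p j).eval x + ∑ k ∈ Finset.Icc (j + 1) m, S.e (j + 1) *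
      ((p k).eval x * cauchyTransform (S.μ (j + 1)) (S.weight (j + 1) k) x) := by
  rw [form, sum_Icc_eq_add _ hj.le, weight_self, mul_one]
  congr 1
  refine Finset.sum_congr rfl fun k hk => ?_
  rw [S.weight_of_lt (Finset.mem_Icc.1 hk).1, mul_left_comm]

lemma sum_nodalWeight_mul_form (hj : j < m) {p : ℕ → ℝ[X]} {q : ℝ[X]} {Z : Finset ℝ}
    (hZ : ∀ z ∈ Z, z ∈ S.interval j)
    (hdeg : ∀ k ∈ Finset.Icc j m, (q * p k).degree + 1 < Z.card) :
    ∑ z ∈ Z, Lagrange.nodalWeight Z id z * (q.eval z * S.form j p z) = -(S.e (j + 1) *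
      ∫ t, q.eval t * (S.form (j + 1) p t / (Lagrange.nodal Z id).eval t) ∂(S.μ (j + 1))) := by
  set W := Lagrange.nodal Z id
  have hZK : ∀ z ∈ Z, z ∉ S.interval (j + 1) := fun z hz =>
    (S.disjoint_interval hj).notMem_of_mem_left (hZ z hz)
  have hint : ∀ k ∈ Finset.Icc (j + 1) m, Integrable
      (fun t => (q * p k).eval t * (S.weight (j + 1) k t / W.eval t)) (S.μ (j + 1)) :=
    fun k hk => integrable_eval_mul (S.isCompact_interval _) (S.ae_mem_interval hj)
      ((S.continuousOn_weight (Finset.mem_Icc.1 hk).1 (Finset.mem_Icc.1 hk).2).div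
        W.continuous.continuousOn fun t ht => eval_nodal_id_ne_zero fun htZ => hZK t htZ ht) _
  have hpoly : ∑ z ∈ Z, Lagrange.nodalWeight Z id z * (q * p j).eval z = 0 :=
    sum_nodalWeight_mul_eval_eq_zero (hdeg j (Finset.left_mem_Icc.2 hj.le))
  have hcauchy : ∀ k ∈ Finset.Icc (j + 1) m,
      ∑ z ∈ Z, Lagrange.nodalWeight Z id z * ((q * p k).eval z *
        cauchyTransform (S.μ (j + 1)) (S.weight (j + 1) k) z) =
      -∫ t, (q * p k).eval t * (S.weight (j + 1) k t / W.eval t) ∂(S.μ (j + 1)) := fun k hk =>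
    cauchyTransform.sum_nodalWeight_mul (S.isCompact_interval _) (S.ae_mem_interval hj)
      (S.continuousOn_weight (Finset.mem_Icc.1 hk).1 (Finset.mem_Icc.1 hk).2) hZK
      ((le_add_of_nonneg_right zero_le_one).trans_lt
        (hdeg k (Finset.Icc_subset_Icc_left j.le_succ hk)))
  calc ∑ z ∈ Z, Lagrange.nodalWeight Z id z * (q.eval z * S.form j p z)
      = ∑ z ∈ Z, Lagrange.nodalWeight Z id z * (q * p j).eval z +
          ∑ k ∈ Finset.Icc (j + 1) m, S.e (j + 1) * ∑ z ∈ Z, Lagrange.nodalWeight Z id z *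
            ((q * p k).eval z * cauchyTransform (S.μ (j + 1)) (S.weight (j + 1) k) z) := by
        simp only [Finset.mul_sum]
        rw [Finset.sum_comm, ← Finset.sum_add_distrib]
        refine Finset.sum_congr rfl fun z _ => ?_
        simp only [S.form_eq_add_cauchyTransform hj, eval_mul, mul_add, Finset.mul_sum, mul_assoc,
          mul_left_comm (S.e (j + 1))]
    _ = -(S.e (j + 1) * ∑ k ∈ Finset.Icc (j + 1) m,
          ∫ t, (q * p k).eval t * (S.weight (j + 1) k t / W.eval t) ∂(S.μ (j + 1))) := by
        rw [hpoly, zero_add, ← Finset.mul_sum, Finset.sum_congr rfl hcauchy,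
          Finset.sum_neg_distrib, mul_neg]
    _ = -(S.e (j + 1) * ∫ t, q.eval t * (S.form (j + 1) p t / W.eval t) ∂(S.μ (j + 1))) := by
        rw [← integral_finsetSum _ hint]
        simp only [form, Finset.sum_div, Finset.mul_sum, eval_mul, mul_assoc, mul_div_assoc]

lemma integral_form_succ_div_nodal_eq_zero (hn : Decr m n) (hj : j < m) {p : ℕ → ℝ[X]}
    (hp : ∀ k ≤ m, (p k).degree < n k) {Z : Finset ℝ}
    (hZ : ∀ z ∈ Z, z ∈ S.interval j ∧ S.form j p z = 0) {q : ℝ[X]} {N : ℕ} (hq : q.degree < N)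
    (hcard : N + n j ≤ Z.card) :
    ∫ t, q.eval t * (S.form (j + 1) p t / (Lagrange.nodal Z id).eval t) ∂(S.μ (j + 1)) = 0 := by
  have hdeg : ∀ k ∈ Finset.Icc j m, (q * p k).degree + 1 < Z.card := fun k hk => by
    obtain ⟨hjk, hkm⟩ := Finset.mem_Icc.1 hk
    refine (degree_mul_add_one_lt hq (hp k hkm)).trans_le ?_
    exact_mod_cast (Nat.add_le_add_left (hn.le hjk hkm) N).trans hcard
  have hsum := S.sum_nodalWeight_mul_form hj (fun z hz => (hZ z hz).1) hdeg
  rw [Finset.sum_eq_zero fun z hz => by rw [(hZ z hz).2, mul_zero, mul_zero]] at hsum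
  exact (mul_eq_zero.1 (neg_eq_zero.1 hsum.symm)).resolve_left (S.e_ne_zero _)

lemma eq_zero_of_form_zeros (hj : j ≤ m) {p : ℕ → ℝ[X]} {Z : Finset ℝ}
    (hp : (p j).degree < Z.card) (hZ : ∀ z ∈ Z, S.form j p z = 0)
    (htail : ∀ k ∈ Finset.Icc (j + 1) m, p k = 0) : p j = 0 := by
  refine eq_zero_of_degree_lt_of_eval_finset_eq_zero Z hp fun z hz => ?_
  rw [← hZ z hz, form, sum_Icc_eq_add _ hj, weight_self, mul_one, Finset.sum_eq_zero, add_zero]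
  exact fun k hk => by rw [htail k hk, eval_zero, zero_mul]

theorem forall_eq_zero_of_form_zeros (hn : Decr m n) (hj : j ≤ m) {p : ℕ → ℝ[X]}
    (hp : ∀ k ≤ m, (p k).degree < n k) {Z : Finset ℝ} (hcard : tailSum m n j ≤ Z.card)
    (hZ : ∀ z ∈ Z, z ∈ S.interval j ∧ S.form j p z = 0) : ∀ k ∈ Finset.Icc j m, p k = 0 := by
  induction hj using Nat.decreasingInduction generalizing Z with
  | self =>
    have hpm : p m = 0 := S.eq_zero_of_form_zeros le_rfl
      ((hp m le_rfl).trans_le (by simpa [tailSum] using hcard)) (fun z hz => (hZ z hz).2) (by simp)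
    simpa using hpm
  | of_succ j hj ih =>
    rw [tailSum_eq_add n hj.le] at hcard
    set W := Lagrange.nodal Z id
    have hW0 : ∀ t ∈ S.interval (j + 1), W.eval t ≠ 0 := fun t ht => eval_nodal_id_ne_zero
      fun htZ => (S.disjoint_interval hj).notMem_of_mem_right ht (hZ t htZ).1
    obtain ⟨Y, hYcard, hY⟩ := exists_zeros_of_forall_integral_div_eq_zero
      (S.isCompact_interval _) (S.ordConnected_interval _) (S.ae_mem_interval hj)
      (S.infinite_support hj) (S.continuousOn_form (j + 1) p) W.continuous.continuousOn hW0
      fun q hq => S.integral_form_succ_div_nodal_eq_zero hn hj hp hZ hq (add_comm _ (n j) ▸ hcard)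
    have htail : ∀ k ∈ Finset.Icc (j + 1) m, p k = 0 := ih hYcard.ge hY
    have hpj : p j = 0 := S.eq_zero_of_form_zeros hj.le ((hp j hj.le).trans_le
      (by exact_mod_cast (Nat.le_add_right _ _).trans hcard)) (fun z hz => (hZ z hz).2) htail
    intro k hk
    rcases (Finset.mem_Icc.1 hk).1.eq_or_lt with rfl | hjk
    exacts [hpj, htail k (Finset.mem_Icc.2 ⟨hjk, (Finset.mem_Icc.1 hk).2⟩)]

lemma integral_eval_mul_cauchyTransform_mul_weight {k N : ℕ} (hjk : j < k) (hkm : k ≤ m)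
    {F : ℝ → ℝ} (hF : ContinuousOn F (S.interval j))
    (horth : ∀ q : ℝ[X], q.degree < N → ∫ x, q.eval x * F x ∂(S.μ j) = 0)
    {q : ℝ[X]} (hq : q.degree < (N + 1 : ℕ)) :
    S.e (j + 1) * ∫ t, q.eval t * (cauchyTransform (S.μ j) F t * S.weight (j + 1) k t)
      ∂(S.μ (j + 1)) = -∫ x, q.eval x * (F x * S.weight j k x) ∂(S.μ j) := by
  have hjm : j < m := hjk.trans_le hkm
  have hμj := S.ae_mem_interval hjm.le
  have hqF : ContinuousOn (fun x => q.eval x * F x) (S.interval j) :=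
    q.continuous.continuousOn.mul hF
  have hw : ContinuousOn (S.weight (j + 1) k) (S.interval (j + 1)) :=
    S.continuousOn_weight hjk hkm
  have habsorb : ∀ t ∈ S.interval (j + 1),
      q.eval t * cauchyTransform (S.μ j) F t =
        cauchyTransform (S.μ j) (fun x => q.eval x * F x) t := fun t ht =>
    cauchyTransform.eval_mul_of_orthogonal (S.isCompact_interval j) hμj hF horth hq
      ((S.disjoint_interval hjm).notMem_of_mem_right ht)
  calc S.e (j + 1) * ∫ t, q.eval t * (cauchyTransform (S.μ j) F t * S.weight (j + 1) k t)
        ∂(S.μ (j + 1))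
      = S.e (j + 1) * ∫ t, S.weight (j + 1) k t *
          cauchyTransform (S.μ j) (fun x => q.eval x * F x) t ∂(S.μ (j + 1)) := by
        congr 1
        refine integral_congr_ae ?_
        filter_upwards [S.ae_mem_interval hjm] with t ht
        rw [← habsorb t ht]
        ring
    _ = -∫ x, q.eval x * (F x * S.weight j k x) ∂(S.μ j) := by
        rw [cauchyTransform.integral_mul_eq_neg (S.isCompact_interval j) hμj hqF
          (S.isCompact_interval _) (S.ae_mem_interval hjm) (S.disjoint_interval hjm) hw, mul_neg,
          ← integral_const_mul]
        simp only [S.weight_of_lt hjk, mul_left_comm (S.e (j + 1)), mul_assoc]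

theorem exists_zeros_of_orthogonal (hn : Decr m n) (hj : j ≤ m) {F : ℝ → ℝ}
    (hF : ContinuousOn F (S.interval j))
    (horth : ∀ k ∈ Finset.Icc j m, ∀ q : ℝ[X], q.degree < n k →
      ∫ x, q.eval x * (F x * S.weight j k x) ∂(S.μ j) = 0) :
    ∃ Z : Finset ℝ, Z.card = tailSum m n j ∧ ∀ z ∈ Z, z ∈ S.interval j ∧ F z = 0 := by
  have horthF : ∀ q : ℝ[X], q.degree < n j → ∫ x, q.eval x * F x ∂(S.μ j) = 0 := fun q hq => by
    simpa only [weight_self, mul_one] using horth j (Finset.left_mem_Icc.2 hj) q hq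
  induction hj using Nat.decreasingInduction generalizing F with
  | self =>
    rw [tailSum, Finset.Icc_self, Finset.sum_singleton]
    exact exists_zeros_of_forall_integral_eq_zero (S.isCompact_interval m)
      (S.ordConnected_interval m) (S.ae_mem_interval le_rfl) (S.infinite_support le_rfl) hF horthF
  | of_succ j hj ih =>
    have hμj := S.ae_mem_interval hj.le
    have hGorth : ∀ k ∈ Finset.Icc (j + 1) m, ∀ q : ℝ[X], q.degree < n k →
        ∫ t, q.eval t * (cauchyTransform (S.μ j) F t * S.weight (j + 1) k t) ∂(S.μ (j + 1)) = 0 :=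
      fun k hk q hq => by
        obtain ⟨hjk, hkm⟩ := Finset.mem_Icc.1 hk
        have h := S.integral_eval_mul_cauchyTransform_mul_weight hjk hkm hF horthF
          (hq.trans_le (by exact_mod_cast (hn.le (j.le_succ.trans hjk) hkm).trans (n j).le_succ))
        rw [horth k (Finset.Icc_subset_Icc_left j.le_succ hk) q hq, neg_zero] at h
        exact (mul_eq_zero.1 h).resolve_left (S.e_ne_zero _)
    obtain ⟨Z, hZcard, hZ⟩ := ih (cauchyTransform.continuousOn (S.isCompact_interval j) hμj hF
      (S.isCompact_interval _) (S.disjoint_interval hj)) hGorth fun q hq => by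
        simpa only [weight_self, mul_one] using hGorth _ (Finset.left_mem_Icc.2 hj) q hq
    have hZK : ∀ z ∈ Z, z ∉ S.interval j := fun z hz =>
      (S.disjoint_interval hj).notMem_of_mem_right (hZ z hz).1
    refine exists_zeros_of_forall_integral_div_eq_zero (S.isCompact_interval j)
      (S.ordConnected_interval j) hμj (S.infinite_support hj.le) hF
      (Lagrange.nodal Z id).continuous.continuousOn
      (fun t ht => eval_nodal_id_ne_zero fun htZ => hZK t htZ ht) fun q hq => ?_
    rw [tailSum_eq_add n hj.le, ← hZcard] at hq
    exact cauchyTransform.integral_div_nodal_eq_zero (S.isCompact_interval j) hμj hF horthF hZK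
      (fun z hz => (hZ z hz).2) hq

end Zeros

end NikSys

section MultiIndices

lemma exists_eq_add_one_of_sum_eq_add_one {ι : Type*} {s : Finset ι} {f g : ι → ℕ}
    (hle : ∀ i ∈ s, f i ≤ g i) (hsum : ∑ i ∈ s, g i = ∑ i ∈ s, f i + 1) :
    ∃ l ∈ s, g l = f l + 1 ∧ ∀ i ∈ s, i ≠ l → g i = f i := by
  classical
  have hlt : ∑ i ∈ s, f i < ∑ i ∈ s, g i := hsum ▸ Nat.lt_succ_self _
  obtain ⟨l, hl, hlt⟩ := Finset.exists_lt_of_sum_lt hlt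
  have hle' : ∀ i ∈ s.erase l, f i ≤ g i := fun i hi => hle i (Finset.mem_of_mem_erase hi)
  have hrest := Finset.sum_le_sum hle'
  rw [← Finset.add_sum_erase s g hl, ← Finset.add_sum_erase s f hl] at hsum
  refine ⟨l, hl, by lia, fun i hi hil => ?_⟩
  exact ((Finset.sum_eq_sum_iff_of_le hle').1 (by lia) i (Finset.mem_erase.2 ⟨hil, hi⟩)).symm

/-- The vectors of polynomials `(p_0, …, p_m)` with `deg p_j ≤ n_j - 1`. Vectors are indexed by
all of `ℕ`, as in `IsMOP`; the entries beyond `m` are unrestricted. -/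
def degreeBox (m : ℕ) (n : ℕ → ℕ) : Submodule ℝ (ℕ → ℝ[X]) :=
  Submodule.pi (Iic m) fun j => degreeLT ℝ (n j)

variable {m : ℕ} {n n' : ℕ → ℕ} {p q : ℕ → ℝ[X]}

lemma mem_degreeBox : p ∈ degreeBox m n ↔ ∀ j ≤ m, (p j).degree < n j := by
  simp only [degreeBox, Submodule.mem_pi, mem_Iic, mem_degreeLT]

lemma degreeBox_mono (h : ∀ j ≤ m, n j ≤ n' j) : degreeBox m n ≤ degreeBox m n' :=
  fun _ hp => mem_degreeBox.2 fun j hj =>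
    (mem_degreeBox.1 hp j hj).trans_le (by exact_mod_cast h j hj)

lemma single_mem_degreeBox {k : ℕ} {r : ℝ[X]} (hr : r.degree < n k) :
    Pi.single k r ∈ degreeBox m n := by
  refine mem_degreeBox.2 fun j _ => ?_
  rcases eq_or_ne j k with rfl | hjk
  · rwa [Pi.single_eq_same]
  · rw [Pi.single_eq_of_ne hjk, degree_zero]
    exact WithBot.bot_lt_coe _

lemma exists_sub_smul_mem_degreeBox (hle : ∀ j ≤ m, n j ≤ n' j)
    (hsum : msum m n' = msum m n + 1) (hp : p ∈ degreeBox m n') (hpn : p ∉ degreeBox m n)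
    (hq : q ∈ degreeBox m n') : ∃ c : ℝ, q - c • p ∈ degreeBox m n := by
  obtain ⟨l, hl, hnl, hne⟩ := exists_eq_add_one_of_sum_eq_add_one
    (fun i hi => hle i (Nat.lt_succ_iff.1 (Finset.mem_range.1 hi))) hsum
  have hmem : ∀ r ∈ degreeBox m n', (r l).coeff (n l) = 0 → r ∈ degreeBox m n := by
    refine fun r hr hrl => mem_degreeBox.2 fun j hj => ?_
    have hrj := mem_degreeBox.1 hr j hj
    rcases eq_or_ne j l with rfl | hjl
    · rw [hnl] at hrj
      rw [degree_lt_iff_coeff_zero] at hrj ⊢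
      intro i hi
      rcases hi.eq_or_lt with rfl | hlt
      exacts [hrl, hrj i hlt]
    · rwa [hne j (Finset.mem_range.2 (Nat.lt_succ_iff.2 hj)) hjl] at hrj
  have hcoeff : (p l).coeff (n l) ≠ 0 := fun h => hpn (hmem p hp h)
  refine ⟨(q l).coeff (n l) / (p l).coeff (n l),
    hmem _ (sub_mem hq (Submodule.smul_mem _ _ hp)) ?_⟩
  rw [Pi.sub_apply, Pi.smul_apply, coeff_sub, coeff_smul, smul_eq_mul, div_mul_cancel₀ _ hcoeff,
    sub_self]

end MultiIndices

section Pairing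

variable {m₁ m₂ : ℕ} {S₁ : NikSys m₁} {S₂ : NikSys m₂} {n₁ n₂ : ℕ → ℕ} {A B : ℕ → ℝ[X]}

namespace NikSys

lemma form_sub_smul {m : ℕ} (S : NikSys m) (j : ℕ) (p q : ℕ → ℝ[X]) (c x : ℝ) :
    S.form j (p - c • q) x = S.form j p x - c * S.form j q x := by
  simp only [form, Finset.mul_sum, ← Finset.sum_sub_distrib]
  refine Finset.sum_congr rfl fun k _ => ?_
  rw [Pi.sub_apply, Pi.smul_apply, eval_sub, eval_smul, smul_eq_mul, sub_mul, mul_assoc]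

lemma sInt_ofReal {m : ℕ} (S : NikSys m) {j k : ℕ} (hjk : j ≤ k) (f : ℝ → ℝ) :
    sInt S.μ S.e j k (fun x => (f x : ℂ)) =
      (S.e j * ∫ x, f x * S.weight j k x ∂(S.μ j) : ℝ) := by
  simp only [sInt, ← S.ofReal_weight hjk, ← Complex.ofReal_mul, integral_complex_ofReal]

/-- The bilinear pairing `∫ 𝔅 𝔄 dμ` of the forms `𝔄 = ∑ A_j ŝ¹_{1,j}` and `𝔅 = ∑ B_k ŝ²_{1,k}`
with respect to the base measure `μ = |σ²_0|`. -/
def pairing (S₁ : NikSys m₁) (S₂ : NikSys m₂) (A B : ℕ → ℝ[X]) : ℝ :=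
  ∫ x, S₂.form 0 B x * S₁.form 0 A x ∂(S₂.μ 0)

lemma ofReal_pairing (S₁ : NikSys m₁) (S₂ : NikSys m₂) (A B : ℕ → ℝ[X]) :
    (pairing S₁ S₂ A B : ℂ) = ∫ x, linForm S₂.μ S₂.e m₂ 0 B (x : ℂ) *
      linForm S₁.μ S₁.e m₁ 0 A (x : ℂ) ∂(S₂.μ 0) := by
  simp only [pairing, ← integral_complex_ofReal, Complex.ofReal_mul, ofReal_form]

variable (hμ : S₁.μ 0 = S₂.μ 0)
include hμ

lemma pairing_comm (A B : ℕ → ℝ[X]) : pairing S₁ S₂ A B = pairing S₂ S₁ B A := by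
  simp only [pairing, hμ, mul_comm]

lemma interval_zero_eq : S₁.interval 0 = S₂.interval 0 := by
  rw [← S₁.convexHull_support (Nat.zero_le _), ← S₂.convexHull_support (Nat.zero_le _), hμ]

lemma continuousOn_form_mul_weight (A : ℕ → ℝ[X]) {k : ℕ} (hk : k ≤ m₂) :
    ContinuousOn (fun x => S₁.form 0 A x * S₂.weight 0 k x) (S₂.interval 0) :=
  (interval_zero_eq hμ ▸ S₁.continuousOn_form 0 A).mul (S₂.continuousOn_weight (Nat.zero_le k) hk)

lemma pairing_sub_smul (A B C : ℕ → ℝ[X]) (c : ℝ) :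
    pairing S₁ S₂ A (C - c • B) = pairing S₁ S₂ A C - c * pairing S₁ S₂ A B := by
  have hint : ∀ D : ℕ → ℝ[X],
      Integrable (fun x => S₂.form 0 D x * S₁.form 0 A x) (S₂.μ 0) := fun D =>
    integrable_of_continuousOn_of_ae_mem (S₂.isCompact_interval 0)
      (S₂.ae_mem_interval (Nat.zero_le _))
      ((S₂.continuousOn_form 0 D).mul (interval_zero_eq hμ ▸ S₁.continuousOn_form 0 A))
  simp only [pairing, form_sub_smul, sub_mul, mul_assoc]
  rw [integral_sub (hint C) ((hint B).const_mul c), integral_const_mul]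

lemma pairing_eq_sum (A B : ℕ → ℝ[X]) :
    pairing S₁ S₂ A B = ∑ k ∈ Finset.Icc 0 m₂,
      ∫ x, (B k).eval x * (S₁.form 0 A x * S₂.weight 0 k x) ∂(S₂.μ 0) := by
  rw [← integral_finsetSum _ fun k hk => integrable_eval_mul (S₂.isCompact_interval 0)
    (S₂.ae_mem_interval (Nat.zero_le _))
    (continuousOn_form_mul_weight hμ A (Finset.mem_Icc.1 hk).2) (B k)]
  have hB (x : ℝ) : S₂.form 0 B x = ∑ k ∈ Finset.Icc 0 m₂, (B k).eval x * S₂.weight 0 k x := rfl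
  simp only [pairing, hB, Finset.sum_mul, mul_assoc, mul_comm (S₂.weight _ _ _)]

lemma pairing_single (A : ℕ → ℝ[X]) {k : ℕ} (hk : k ≤ m₂) (q : ℝ[X]) :
    pairing S₁ S₂ A (Pi.single k q) =
      ∫ x, q.eval x * (S₁.form 0 A x * S₂.weight 0 k x) ∂(S₂.μ 0) := by
  rw [pairing_eq_sum hμ, Finset.sum_eq_single_of_mem k (Finset.mem_Icc.2 ⟨Nat.zero_le k, hk⟩)
    fun i _ hik => by simp [Pi.single_eq_of_ne hik], Pi.single_eq_same]

theorem eq_zero_of_forall_pairing_eq_zero (hn₁ : Decr m₁ n₁) (hn₂ : Decr m₂ n₂)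
    (hle : msum m₁ n₁ ≤ msum m₂ n₂) (hA : A ∈ degreeBox m₁ n₁)
    (horth : ∀ B ∈ degreeBox m₂ n₂, pairing S₁ S₂ A B = 0) : ∀ j ≤ m₁, A j = 0 := by
  have hinterval : S₁.interval 0 = S₂.interval 0 := interval_zero_eq hμ
  obtain ⟨Z, hcard, hZ⟩ := S₂.exists_zeros_of_orthogonal hn₂ (Nat.zero_le _)
    (hinterval ▸ S₁.continuousOn_form 0 A) fun k hk q hq =>
      pairing_single hμ A (Finset.mem_Icc.1 hk).2 q ▸ horth _ (single_mem_degreeBox hq)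
  have hA0 := S₁.forall_eq_zero_of_form_zeros hn₁ (Nat.zero_le _) (mem_degreeBox.1 hA)
    (by rwa [hcard, tailSum_zero, tailSum_zero]) (hinterval ▸ hZ)
  exact fun j hj => hA0 j (Finset.mem_Icc.2 ⟨Nat.zero_le j, hj⟩)

end NikSys

namespace IsMOP

open NikSys

protected lemma mem_degreeBox (hA : IsMOP m₁ m₂ S₁ S₂ n₁ n₂ A) : A ∈ degreeBox m₁ n₁ :=
  mem_degreeBox.2 hA.1

lemma integral_pow_mul_eq_zero (hA : IsMOP m₁ m₂ S₁ S₂ n₁ n₂ A) {k i : ℕ} (hk : k ≤ m₂)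
    (hi : i < n₂ k) : ∫ x, x ^ i * (S₁.form 0 A x * S₂.weight 0 k x) ∂(S₂.μ 0) = 0 := by
  have h := hA.2.2 k hk i hi
  simp only [← S₁.ofReal_form, ← Complex.ofReal_pow, ← Complex.ofReal_mul] at h
  rw [S₂.sInt_ofReal (Nat.zero_le k), Complex.ofReal_eq_zero, mul_eq_zero] at h
  simpa only [mul_assoc] using h.resolve_left (S₂.e_ne_zero 0)

variable (hμ : S₁.μ 0 = S₂.μ 0)
include hμ

theorem pairing_eq_zero (hA : IsMOP m₁ m₂ S₁ S₂ n₁ n₂ A) (hB : B ∈ degreeBox m₂ n₂) :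
    pairing S₁ S₂ A B = 0 := by
  rw [pairing_eq_sum hμ]
  refine Finset.sum_eq_zero fun k hk => ?_
  have hkm := (Finset.mem_Icc.1 hk).2
  refine integral_eval_mul_eq_zero_of_moments (fun i _ => ?_)
    (fun i hi => hA.integral_pow_mul_eq_zero hkm hi) (mem_degreeBox.1 hB k hkm)
  simpa only [eval_pow, eval_X] using integrable_eval_mul (S₂.isCompact_interval 0)
    (S₂.ae_mem_interval (Nat.zero_le _)) (continuousOn_form_mul_weight hμ A hkm) (X ^ i)

theorem pairing_ne_zero {n₁' n₂' : ℕ → ℕ} (hn₁ : Decr m₁ n₁) (hn₁' : Decr m₁ n₁')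
    (hn₂ : Decr m₂ n₂) (hn₂' : Decr m₂ n₂') (hle : ∀ j ≤ m₂, n₂ j ≤ n₂' j)
    (hsum : msum m₂ n₂ = msum m₁ n₁) (hsum' : msum m₁ n₁' = msum m₂ n₂')
    (hstep : msum m₂ n₂' = msum m₂ n₂ + 1) (hA : IsMOP m₁ m₂ S₁ S₂ n₁' n₂ A)
    (hB : IsMOP m₂ m₁ S₂ S₁ n₂' n₁ B) : pairing S₁ S₂ A B ≠ 0 := by
  intro hAB
  have hBn : B ∉ degreeBox m₂ n₂ := fun hBn => by
    obtain ⟨k, hk, hBk⟩ := hB.2.1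
    exact hBk (eq_zero_of_forall_pairing_eq_zero hμ.symm hn₂ hn₁ hsum.le hBn
      (fun C hC => hB.pairing_eq_zero hμ.symm hC) k hk)
  have hA_orth : ∀ C ∈ degreeBox m₂ n₂', pairing S₁ S₂ A C = 0 := fun C hC => by
    obtain ⟨c, hc⟩ := exists_sub_smul_mem_degreeBox hle hstep hB.mem_degreeBox hBn hC
    have h := hA.pairing_eq_zero hμ hc
    rwa [pairing_sub_smul hμ, hAB, mul_zero, sub_zero] at h
  obtain ⟨j, hj, hAj⟩ := hA.2.1
  exact hAj (eq_zero_of_forall_pairing_eq_zero hμ hn₁' hn₂' hsum'.le hA.mem_degreeBox hA_orth j hj)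

end IsMOP

end Pairing

/-- **Bi-orthogonality.**  Let `𝔄_n` be the monic mixed type forms for
`(n₁(n); n₂(n-1))` and `(S¹,S²)`, and `𝔅_n` those for `(n₂(n); n₁(n-1))` and
`(S²,S¹)`.  Then `∫ 𝔅_{n'} 𝔄_n dσ²_0 = 0` for `n ≠ n'` and `≠ 0` for `n = n'`. -/
theorem biorthogonality
    (m₁ m₂ : ℕ) (S1 : NikSys m₁) (S2 : NikSys m₂)
    (hbase : S1.μ 0 = S2.μ 0 ∧ S1.e 0 = S2.e 0)
    (I₁ I₂ : ℕ → (ℕ → ℕ))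
    (hI₁ : CompleteOrdered m₁ I₁) (hI₂ : CompleteOrdered m₂ I₂)
    (A B : ℕ → (ℕ → Polynomial ℝ))
    (hA : ∀ n, 1 ≤ n →
      IsMOP m₁ m₂ S1 S2 (I₁ n) (I₂ (n - 1)) (A n) ∧ MonicLast m₁ (A n))
    (hB : ∀ n, 1 ≤ n →
      IsMOP m₂ m₁ S2 S1 (I₂ n) (I₁ (n - 1)) (B n) ∧ MonicLast m₂ (B n)) :
    ∀ n n', 1 ≤ n → 1 ≤ n' →
      (n ≠ n' →
        (S2.e 0 : ℂ) * ∫ x, linForm S2.μ S2.e m₂ 0 (B n') (x : ℂ) *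
          linForm S1.μ S1.e m₁ 0 (A n) (x : ℂ) ∂(S2.μ 0) = 0) ∧
      (S2.e 0 : ℂ) * ∫ x, linForm S2.μ S2.e m₂ 0 (B n) (x : ℂ) *
        linForm S1.μ S1.e m₁ 0 (A n) (x : ℂ) ∂(S2.μ 0) ≠ 0 := by
  have hμ := hbase.1
  intro n n' hn hn'
  obtain ⟨hAn, -⟩ := hA n hn
  refine ⟨fun hne => mul_eq_zero_of_right _ ?_,
    mul_ne_zero (Complex.ofReal_ne_zero.2 (S2.e_ne_zero 0)) ?_⟩
  · obtain ⟨hBn', -⟩ := hB n' hn'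
    rw [← NikSys.ofReal_pairing, Complex.ofReal_eq_zero]
    rcases hne.lt_or_gt with hlt | hgt
    · rw [NikSys.pairing_comm hμ]
      exact hBn'.pairing_eq_zero hμ.symm
        (degreeBox_mono (fun j _ => hI₁.2 _ _ (Nat.le_sub_one_of_lt hlt) j) hAn.mem_degreeBox)
    · exact hAn.pairing_eq_zero hμ
        (degreeBox_mono (fun j _ => hI₂.2 _ _ (Nat.le_sub_one_of_lt hgt) j) hBn'.mem_degreeBox)
  · rw [← NikSys.ofReal_pairing, Complex.ofReal_ne_zero]
    have hsum₁ := fun k => (hI₁.1 k).2.2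
    have hsum₂ := fun k => (hI₂.1 k).2.2
    exact hAn.pairing_ne_zero hμ (hI₁.1 _).1 (hI₁.1 _).1 (hI₂.1 _).1 (hI₂.1 _).1
      (fun j _ => hI₂.2 _ _ (Nat.sub_le n 1) j) (by rw [hsum₁, hsum₂]) (by rw [hsum₁, hsum₂])
      (by rw [hsum₂, hsum₂, Nat.sub_add_cancel hn]) (hB n hn).1

end
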